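/- Let q be an odd prime power, let (q+1)/2 ≤ k ≤ q-1, and let R be a subset of F_q of size q-k-1 such that e^{(q-1)/2} = 1 for all e ∈ R. Define g(X) = X^{(q+1)/2}·∏_{e ∈ R}(X^{q+1} - e) ∈ F_{q^2}[X]. Then the function x ↦ g(x) + g(x)^q has exactly (q^2+1)/2 + (q-k-1)(q+1) distinct zeros in F_{q^2}. -/

import Mathlib

/-!
Write `N x = x ^ (q + 1)` for the norm from `𝔽_{q²}` to `𝔽_q`. Since the `q`-th power map is a
field endomorphism fixing both the norms and the elements of `R`, it fixes `∏ e ∈ R, (N x - e)`, so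
`g(x) + g(x)^q = x^((q+1)/2) · (N x ^ ((q-1)/2) + 1) · ∏ e ∈ R, (N x - e)`.
Hence the nonzero zeros are the `x` whose norm is a nonsquare of `𝔽_q` or an element of `R`. These
values form a set of `(q-1)/2 + |R|` nonzero elements of `𝔽_q`, because `R` consists of squares, and
every nonzero element of `𝔽_q` is the norm of exactly `q + 1` elements.
-/

open Polynomial (nthRootsFinset mem_nthRootsFinset)

section PowerFibers

theorem card_nthRootsFinset_of_pow_eq_one {K : Type*} [CommRing K] [IsDomain K] {ζ a : K}
    {n m : ℕ} (hζ : IsPrimitiveRoot ζ (n * m)) (hpos : 0 < n * m) (ha : a ^ m = 1) :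
    (nthRootsFinset n a).card = n := by
  classical
  have hm : 0 < m := Nat.pos_of_mul_pos_left hpos
  have : NeZero m := ⟨hm.ne'⟩
  have ha0 : a ≠ 0 := by
    rintro rfl
    exact zero_ne_one ((zero_pow hm.ne').symm.trans ha)
  have hroot : ∃ b, b ^ n = a := by
    obtain ⟨i, -, hi⟩ := (hζ.pow hpos rfl).eq_pow_of_pow_eq_one ha
    exact ⟨ζ ^ i, by rw [← hi, pow_right_comm]⟩
  have hζm : IsPrimitiveRoot (ζ ^ m) n := hζ.pow hpos (mul_comm n m)
  rw [nthRootsFinset, Multiset.toFinset_card_of_nodup (hζm.nthRoots_nodup ha0),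
    hζm.card_nthRoots, if_pos hroot]

theorem exists_isPrimitiveRoot_card_sub_one (F : Type*) [Field F] [Fintype F] :
    ∃ ζ : F, IsPrimitiveRoot ζ (Fintype.card F - 1) := by
  classical
  obtain ⟨u, hu⟩ := IsCyclic.exists_ofOrder_eq_natCard (α := Fˣ)
  rw [Nat.card_eq_fintype_card, Fintype.card_units] at hu
  exact ⟨u, hu ▸ IsPrimitiveRoot.coe_units_iff.mpr (IsPrimitiveRoot.orderOf u)⟩

variable {F : Type*} [Field F] [Fintype F]

theorem card_nthRootsFinset_of_mul_eq_card_sub_one {n m : ℕ} (hnm : n * m = Fintype.card F - 1)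
    {a : F} (ha : a ^ m = 1) : (nthRootsFinset n a).card = n := by
  obtain ⟨ζ, hζ⟩ := exists_isPrimitiveRoot_card_sub_one F
  have hpos : 0 < n * m := hnm ▸ Nat.sub_pos_of_lt Fintype.one_lt_card
  exact card_nthRootsFinset_of_pow_eq_one (hnm ▸ hζ) hpos ha

theorem ncard_setOf_pow_mem {n m : ℕ} (hnm : n * m = Fintype.card F - 1) {S : Finset F}
    (hS : ∀ a ∈ S, a ^ m = 1) : {x : F | x ^ n ∈ S}.ncard = S.card * n := by
  classical
  have hn : 0 < n :=
    Nat.pos_of_mul_pos_right (hnm ▸ Nat.sub_pos_of_lt Fintype.one_lt_card : 0 < n * m)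
  have hfiber : ∀ a ∈ S, (Finset.univ.filter fun x : F => x ^ n = a).card = n := by
    intro a ha
    have hroots : (Finset.univ.filter fun x : F => x ^ n = a) = nthRootsFinset n a := by
      ext x
      rw [Finset.mem_filter_univ, mem_nthRootsFinset hn]
    rw [hroots, card_nthRootsFinset_of_mul_eq_card_sub_one hnm (hS a ha)]
  rw [Set.ncard_eq_toFinset_card', Set.toFinset_ofPred,
    ← Finset.sum_card_fiberwise_eq_card_filter, Finset.sum_const_nat hfiber]

end PowerFibers

section Norm

variable {F : Type*} [Field F] [Fintype F] {q : ℕ}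

theorem exists_ringHom_eq_pow_of_dvd_card (hq : q ∣ Fintype.card F) :
    ∃ φ : F →+* F, ∀ x, φ x = x ^ q := by
  obtain ⟨p, _, n, hp, hcard⟩ := FiniteField.card' F
  obtain ⟨r, -, rfl⟩ := (Nat.dvd_prime_pow hp).mp (hcard ▸ hq)
  have : Fact p.Prime := ⟨hp⟩
  exact ⟨iterateFrobenius F p r, iterateFrobenius_def p r⟩

theorem pow_succ_pow_eq_self (hF : Fintype.card F = q ^ 2) (x : F) :
    (x ^ (q + 1)) ^ q = x ^ (q + 1) := by
  calc (x ^ (q + 1)) ^ q = x ^ q ^ 2 * x ^ q := by ring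
    _ = x * x ^ q := by rw [← hF, FiniteField.pow_card]
    _ = x ^ (q + 1) := (pow_succ' x q).symm

theorem prod_pow_succ_sub_pow_eq_self (hF : Fintype.card F = q ^ 2) {R : Finset F}
    (hR : ∀ e ∈ R, e ^ q = e) (x : F) :
    (∏ e ∈ R, (x ^ (q + 1) - e)) ^ q = ∏ e ∈ R, (x ^ (q + 1) - e) := by
  obtain ⟨φ, hφ⟩ := exists_ringHom_eq_pow_of_dvd_card (hF ▸ dvd_pow_self q two_ne_zero)
  rw [← hφ, map_prod]
  refine Finset.prod_congr rfl fun e he => ?_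
  rw [map_sub, hφ, hφ, pow_succ_pow_eq_self hF, hR e he]

end Norm

section Zeros

-- Here `q = 2 * n + 1`, so that `n + 1 = (q + 1) / 2`; the exponent `2 * n + 1 + 1` is that of `N`.

theorem half_power_mul_add_pow {A : Type*} [CommSemiring A] {n : ℕ} (x : A) {c : A}
    (hc : c ^ (2 * n + 1) = c) :
    x ^ (n + 1) * c + (x ^ (n + 1) * c) ^ (2 * n + 1)
      = x ^ (n + 1) * ((x ^ (2 * n + 1 + 1)) ^ n + 1) * c := by
  rw [mul_pow, hc]
  ring

theorem neg_one_ne_one_of_odd_card {F : Type*} [Field F] [Fintype F]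
    (hF : Odd (Fintype.card F)) : (-1 : F) ≠ 1 :=
  Ring.neg_one_ne_one_of_char_ne_two fun hchar =>
    Nat.not_even_iff_odd.mpr hF (Nat.even_iff.mpr (FiniteField.even_card_of_char_two hchar))

section RootsOfOneAndNegOne

variable {K : Type*} [CommRing K] [IsDomain K] {n : ℕ} {R : Finset K}

theorem disjoint_nthRootsFinset_neg_one (hK : (-1 : K) ≠ 1) (hn : 0 < n)
    (hR : ∀ e ∈ R, e ^ n = 1) : Disjoint (nthRootsFinset n (-1)) R :=
  Finset.disjoint_left.mpr fun e he heR =>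
    hK (((mem_nthRootsFinset hn _).mp he).symm.trans (hR e heR))

theorem pow_two_mul_eq_one_of_mem_nthRootsFinset_neg_one_union [DecidableEq K] (hn : 0 < n)
    (hR : ∀ e ∈ R, e ^ n = 1) : ∀ a ∈ nthRootsFinset n (-1) ∪ R, a ^ (2 * n) = 1 := by
  intro a ha
  rw [mul_comm, pow_mul, sq_eq_one_iff]
  rcases Finset.mem_union.mp ha with ha | ha
  · exact Or.inr ((mem_nthRootsFinset hn _).mp ha)
  · exact Or.inl (hR a ha)

end RootsOfOneAndNegOne

variable {F : Type*} [Field F] [Fintype F] {n : ℕ} {R : Finset F}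

theorem setOf_half_power_mul_prod_add_pow_eq_zero [DecidableEq F] (hn : 0 < n)
    (hF : Fintype.card F = (2 * n + 1) ^ 2) (hR : ∀ e ∈ R, e ^ (2 * n + 1) = e) :
    {x : F | x ^ (n + 1) * (∏ e ∈ R, (x ^ (2 * n + 1 + 1) - e))
        + (x ^ (n + 1) * (∏ e ∈ R, (x ^ (2 * n + 1 + 1) - e))) ^ (2 * n + 1) = 0}
      = insert 0 {x : F | x ^ (2 * n + 1 + 1) ∈ nthRootsFinset n (-1) ∪ R} := by
  ext x
  rw [Set.mem_ofPred_eq, half_power_mul_add_pow x (prod_pow_succ_sub_pow_eq_self hF hR x)]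
  simp only [mul_eq_zero, pow_eq_zero_iff n.succ_ne_zero, add_eq_zero_iff_eq_neg,
    Finset.prod_eq_zero_iff, sub_eq_zero, exists_eq_right', or_assoc, Set.mem_insert_iff,
    Set.mem_ofPred_eq, Finset.mem_union, mem_nthRootsFinset hn]

theorem ncard_setOf_pow_mem_nthRootsFinset_neg_one_union [DecidableEq F] (hn : 0 < n)
    (hF : Fintype.card F = (2 * n + 1) ^ 2) (hR : ∀ e ∈ R, e ^ n = 1) :
    {x : F | x ^ (2 * n + 1 + 1) ∈ nthRootsFinset n (-1) ∪ R}.ncard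
      = (n + R.card) * (2 * n + 1 + 1) := by
  have hcard : Fintype.card F - 1 = (2 * n + 1 + 1) * (2 * n) := by
    rw [hF]
    exact Nat.sub_eq_of_eq_add (by ring)
  have hroots : (nthRootsFinset n (-1 : F)).card = n :=
    card_nthRootsFinset_of_mul_eq_card_sub_one (m := 2 * (2 * n + 1 + 1)) (by rw [hcard]; ring)
      (by rw [pow_mul, neg_one_sq, one_pow])
  have hneg : (-1 : F) ≠ 1 := neg_one_ne_one_of_odd_card (hF ▸ (odd_two_mul_add_one n).pow)
  rw [ncard_setOf_pow_mem hcard.symm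
      (pow_two_mul_eq_one_of_mem_nthRootsFinset_neg_one_union hn hR),
    Finset.card_union_of_disjoint (disjoint_nthRootsFinset_neg_one hneg hn hR), hroots]

end Zeros

theorem zeros_count_q_odd_general {F : Type*} [Field F] [Fintype F] {q : ℕ} (hq : Odd q)
    (hF : Fintype.card F = q ^ 2) {R : Finset F} (hR : ∀ e ∈ R, e ^ ((q - 1) / 2) = 1) :
    Set.ncard {x : F |
        x ^ ((q + 1) / 2) * (∏ e ∈ R, (x ^ (q + 1) - e))
          + (x ^ ((q + 1) / 2) * (∏ e ∈ R, (x ^ (q + 1) - e))) ^ q = 0}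
      = (q ^ 2 + 1) / 2 + R.card * (q + 1) := by
  classical
  obtain ⟨n, rfl⟩ := hq
  have hn : 0 < n := by
    have hcard : (2 * n + 1) ^ 2 ≠ 1 := hF ▸ Fintype.one_lt_card.ne'
    exact Nat.pos_of_ne_zero fun h => hcard (by rw [h]; rfl)
  rw [show (2 * n + 1 - 1) / 2 = n by lia] at hR
  have hpow := pow_two_mul_eq_one_of_mem_nthRootsFinset_neg_one_union hn hR
  have hRq : ∀ e ∈ R, e ^ (2 * n + 1) = e := fun e he => by
    rw [pow_succ, hpow e (Finset.mem_union_right _ he), one_mul]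
  have hzero : (0 : F) ∉ {x : F | x ^ (2 * n + 1 + 1) ∈ nthRootsFinset n (-1) ∪ R} := fun h => by
    simpa [hn.ne'] using hpow _ h
  have hsq : ((2 * n + 1) ^ 2 + 1) / 2 = n * (2 * n + 1 + 1) + 1 :=
    Nat.div_eq_of_eq_mul_right two_pos (by ring)
  rw [show (2 * n + 1 + 1) / 2 = n + 1 by lia, setOf_half_power_mul_prod_add_pow_eq_zero hn hF hRq,
    Set.ncard_insert_of_notMem hzero, ncard_setOf_pow_mem_nthRootsFinset_neg_one_union hn hF hR,
    hsq]
  ring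

/-- Let `q` be an odd prime power, let `(q+1)/2 ≤ k ≤ q-1`, and let `R` be
a subset of `𝔽_q` of size `q - k - 1` such that `e^((q-1)/2) = 1` for all `e ∈ R`.  Define
`g(X) = X^((q+1)/2)·∏_{e ∈ R}(X^(q+1) - e)`.  Then the function `x ↦ g(x) + g(x)^q` has
exactly `(q²+1)/2 + (q-k-1)(q+1)` distinct zeros in `𝔽_{q²}`. -/
theorem zeros_count_q_odd
    (q k : ℕ) (hq : IsPrimePow q) (hodd : Odd q) (hk1 : q + 1 ≤ 2 * k) (hk2 : k ≤ q - 1)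
    (F : Type) [Field F] [Fintype F] (hF : Fintype.card F = q ^ 2)
    (R : Finset F) (hRcard : R.card = q - k - 1)
    (hR : ∀ e ∈ R, e ^ q = e ∧ e ^ ((q - 1) / 2) = 1) :
    Set.ncard {x : F |
        x ^ ((q + 1) / 2) * (∏ e ∈ R, (x ^ (q + 1) - e))
          + (x ^ ((q + 1) / 2) * (∏ e ∈ R, (x ^ (q + 1) - e))) ^ q = 0}
      = (q ^ 2 + 1) / 2 + (q - k - 1) * (q + 1) := by
  have hR' : ∀ e ∈ R, e ^ ((q - 1) / 2) = 1 := fun e he => (hR e he).2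
  rw [zeros_count_q_odd_general hodd hF hR', hRcard]
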